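/- Let X, Y, Q, A, B ∈ ℂ[t] with deg X = 4, deg Y = 5, deg Q = 2, A constant, deg B ≤ 1, satisfying X^3 + A·X + B = Q·Y^2, and assume 4A^3 + 27B^2 is not the zero polynomial (nondegeneracy of the cubic x^3 + Ax + B). Let X₀(t) = 324t^4 - 360t^3 + 216t^2 - 84t + 15, Y₀(t) = 36(54t^5 - 60t^4 + 45t^3 - 21t^2 + 6t - 1), Q₀(t) = 9t^2 - 10t + 3, B₀(t) = -18(8t - 1). Then there exist λ, u, v ∈ ℂ with λ, u, v ≠ 0 and μ ∈ ℂ such that X(t) = u^2·X₀(λt + μ), A = 33·u^4, B(t) = u^6·B₀(λt + μ), Q(t) = v^2·Q₀(λt + μ), and Y(t) = u^3·v^{-1}·Y₀(λt + μ). That is, up to rescaling t and the polynomials A, B, Q, X, Y, the only nondegenerate solution of X^3 + AX + B = QY^2 with degrees (0,1,2,4,5) is the Elkies solution. -/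

import Mathlib

open Polynomial

/-- If a polynomial expression of degree at most nine vanishes identically on `ℂ`, then so do its
coefficients. -/
theorem coeffs_eq_zero_of_forall_eval {c : Fin 10 → ℂ}
    (h : ∀ t : ℂ, ∑ i, c i * t ^ (i : ℕ) = 0) (i : Fin 10) : c i = 0 := by
  have hp : (∑ i, C (c i) * X ^ (i : ℕ) : ℂ[X]) = 0 := by
    refine Polynomial.funext fun t => ?_
    simpa [eval_finsetSum] using h t
  have hi := congrArg (fun p : ℂ[X] => p.coeff i) hp
  simpa [finsetSum_coeff, coeff_C_mul, coeff_X_pow, Fin.val_inj] using hi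


/-- The coefficient analysis of the two normalised relations: up to the scale `l` of the variable
they have a single solution. -/
theorem normalized_coeffs (z0 z1 z2 z3 v0 v1 v2 m0 m1 q s d k : ℂ) (hk : k ≠ 0)
    (hF : ∀ t : ℂ,
      16 * (v2 * t ^ 2 + v1 * t + v0) ^ 2
          * (t ^ 4 + z3 * t ^ 3 + z2 * t ^ 2 + z1 * t + z0 - 9 * k * (t - s))
        + 24 * k * (m1 * t + m0)
          * (t ^ 4 + z3 * t ^ 3 + z2 * t ^ 2 + z1 * t + z0 - k * (t - s))
        - (t ^ 2 - q) * (4 * t ^ 3 + 3 * z3 * t ^ 2 + 2 * z2 * t + z1 - k) ^ 2 = 0)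
    (hG : ∀ t : ℂ,
      144 * k * ((t - s) ^ 2 + d) * (v2 * t ^ 2 + v1 * t + v0) ^ 2
        - 8 * (t ^ 4 + z3 * t ^ 3 + z2 * t ^ 2 + z1 * t + z0) ^ 2 * (m1 * t + m0)
        + (t ^ 2 - q) * (2 * (t ^ 4 + z3 * t ^ 3 + z2 * t ^ 2 + z1 * t + z0)
            * (4 * t ^ 3 + 3 * z3 * t ^ 2 + 2 * z2 * t + z1)
          - 5 * k * (t ^ 4 + z3 * t ^ 3 + z2 * t ^ 2 + z1 * t + z0)
          + 3 * k ^ 2 * (t - s)) = 0) :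
    ∃ l : ℂ, l ≠ 0 ∧ q = -(8 / 25) * l ^ 2 ∧ k = 432 / 1375 * l ^ 3 ∧ z3 = -4 * l ∧
      z2 = 216 / 25 * l ^ 2 ∧ z1 = -(7592 / 1375) * l ^ 3 ∧ z0 = 4696 / 6875 * l ^ 4 ∧
      s = 31 / 20 * l ∧ d = 1331 / 400 * l ^ 2 := by
  have cG := coeffs_eq_zero_of_forall_eval (c := ![
      144 * k * s ^ 2 * v0 ^ 2 + 144 * d * k * v0 ^ 2 + 3 * k ^ 2 * q * s + 5 * k * q * z0
        - 8 * m0 * z0 ^ 2 - 2 * q * z0 * z1,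
      288 * k * s ^ 2 * v0 * v1 + 288 * d * k * v0 * v1 - 288 * k * s * v0 ^ 2 + 5 * k * q * z1
        - 3 * k ^ 2 * q - 16 * m0 * z0 * z1 - 8 * m1 * z0 ^ 2 - 4 * q * z0 * z2 - 2 * q * z1 ^ 2,
      288 * k * s ^ 2 * v0 * v2 + 144 * k * s ^ 2 * v1 ^ 2 + 288 * d * k * v0 * v2
        + 144 * d * k * v1 ^ 2 - 576 * k * s * v0 * v1 + 5 * k * q * z2 + 144 * k * v0 ^ 2
        - 3 * k ^ 2 * s - 16 * m0 * z0 * z2 - 8 * m0 * z1 ^ 2 - 16 * m1 * z0 * z1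
        - 6 * q * z0 * z3 - 6 * q * z1 * z2 - 5 * k * z0 + 2 * z0 * z1,
      288 * k * s ^ 2 * v1 * v2 + 288 * d * k * v1 * v2 - 576 * k * s * v0 * v2
        - 288 * k * s * v1 ^ 2 + 5 * k * q * z3 + 288 * k * v0 * v1 - 16 * m0 * z0 * z3
        - 16 * m0 * z1 * z2 - 16 * m1 * z0 * z2 - 8 * m1 * z1 ^ 2 - 8 * q * z1 * z3
        - 4 * q * z2 ^ 2 - 5 * k * z1 + 3 * k ^ 2 - 8 * q * z0 + 4 * z0 * z2 + 2 * z1 ^ 2,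
      144 * k * s ^ 2 * v2 ^ 2 + 144 * d * k * v2 ^ 2 - 576 * k * s * v1 * v2
        + 288 * k * v0 * v2 + 144 * k * v1 ^ 2 - 16 * m0 * z1 * z3 - 8 * m0 * z2 ^ 2
        - 16 * m1 * z0 * z3 - 16 * m1 * z1 * z2 - 10 * q * z2 * z3 + 5 * k * q - 5 * k * z2
        - 16 * m0 * z0 - 10 * q * z1 + 6 * z0 * z3 + 6 * z1 * z2,
      -288 * k * s * v2 ^ 2 + 288 * k * v1 * v2 - 16 * m0 * z2 * z3 - 16 * m1 * z1 * z3
        - 8 * m1 * z2 ^ 2 - 6 * q * z3 ^ 2 - 5 * k * z3 - 16 * m0 * z1 - 16 * m1 * z0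
        - 12 * q * z2 + 8 * z1 * z3 + 4 * z2 ^ 2 + 8 * z0,
      144 * k * v2 ^ 2 - 8 * m0 * z3 ^ 2 - 16 * m1 * z2 * z3 - 16 * m0 * z2 - 16 * m1 * z1
        - 14 * q * z3 + 10 * z2 * z3 - 5 * k + 10 * z1,
      -8 * m1 * z3 ^ 2 - 16 * m0 * z3 - 16 * m1 * z2 + 6 * z3 ^ 2 - 8 * q + 12 * z2,
      -16 * m1 * z3 - 8 * m0 + 14 * z3,
      -8 * m1 + 8]) (fun t => by
    simp [Fin.sum_univ_succ]
    linear_combination hG t)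
  have cF := coeffs_eq_zero_of_forall_eval (c := ![
      144 * k * s * v0 ^ 2 + 24 * k ^ 2 * m0 * s + 24 * k * m0 * z0 - 2 * k * q * z1 + k ^ 2 * q
        + q * z1 ^ 2 + 16 * v0 ^ 2 * z0,
      288 * k * s * v0 * v1 + 24 * k ^ 2 * m1 * s + 24 * k * m0 * z1 + 24 * k * m1 * z0
        - 4 * k * q * z2 - 144 * k * v0 ^ 2 - 24 * k ^ 2 * m0 + 4 * q * z1 * z2
        + 32 * v0 * v1 * z0 + 16 * v0 ^ 2 * z1,
      288 * k * s * v0 * v2 + 144 * k * s * v1 ^ 2 + 24 * k * m0 * z2 + 24 * k * m1 * z1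
        - 6 * k * q * z3 - 288 * k * v0 * v1 - 24 * k ^ 2 * m1 + 6 * q * z1 * z3
        + 4 * q * z2 ^ 2 + 32 * v0 * v1 * z1 + 32 * v0 * v2 * z0 + 16 * v0 ^ 2 * z2
        + 16 * v1 ^ 2 * z0 + 2 * k * z1 - k ^ 2 - z1 ^ 2,
      288 * k * s * v1 * v2 + 24 * k * m0 * z3 + 24 * k * m1 * z2 - 288 * k * v0 * v2
        - 144 * k * v1 ^ 2 + 12 * q * z2 * z3 + 32 * v0 * v1 * z2 + 32 * v0 * v2 * z1
        + 16 * v0 ^ 2 * z3 + 32 * v1 * v2 * z0 + 16 * v1 ^ 2 * z1 - 8 * k * q + 4 * k * z2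
        + 8 * q * z1 - 4 * z1 * z2,
      144 * k * s * v2 ^ 2 + 24 * k * m1 * z3 - 288 * k * v1 * v2 + 9 * q * z3 ^ 2
        + 32 * v0 * v1 * z3 + 32 * v0 * v2 * z2 + 32 * v1 * v2 * z1 + 16 * v1 ^ 2 * z2
        + 16 * v2 ^ 2 * z0 + 24 * k * m0 + 6 * k * z3 + 16 * q * z2 + 16 * v0 ^ 2 - 6 * z1 * z3
        - 4 * z2 ^ 2,
      -144 * k * v2 ^ 2 + 32 * v0 * v2 * z3 + 32 * v1 * v2 * z2 + 16 * v1 ^ 2 * z3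
        + 16 * v2 ^ 2 * z1 + 24 * k * m1 + 24 * q * z3 + 32 * v0 * v1 - 12 * z2 * z3 + 8 * k
        - 8 * z1,
      32 * v1 * v2 * z3 + 16 * v2 ^ 2 * z2 + 32 * v0 * v2 + 16 * v1 ^ 2 - 9 * z3 ^ 2 + 16 * q
        - 16 * z2,
      16 * v2 ^ 2 * z3 + 32 * v1 * v2 - 24 * z3,
      16 * v2 ^ 2 - 16,
      0]) (fun t => by
    simp [Fin.sum_univ_succ]
    linear_combination hF t)
  have G9 := cG 9
  have G8 := cG 8
  have G7 := cG 7
  have G6 := cG 6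
  have G5 := cG 5
  have G4 := cG 4
  have F8 := cF 8
  have F7 := cF 7
  have F6 := cF 6
  have F5 := cF 5
  have F4 := cF 4
  have F3 := cF 3
  clear cG cF hF hG
  simp at G9 G8 G7 G6 G5 G4 F8 F7 F6 F5 F4 F3
  have hv2 : v2 ^ 2 = 1 := by linear_combination F8 / 16
  obtain rfl : m1 = 1 := by linear_combination -G9 / 8
  obtain rfl : z3 = -4 * m0 := by linear_combination -G8 / 2
  obtain rfl : z2 = 8 * m0 ^ 2 - 2 * q := by linear_combination -G7 / 4
  obtain ⟨e1, rfl⟩ : ∃ e, v1 = v2 * e := ⟨v2 * v1, by linear_combination -v1 * hv2⟩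
  obtain ⟨e0, rfl⟩ : ∃ e, v0 = v2 * e := ⟨v2 * v0, by linear_combination -v0 * hv2⟩
  rcases eq_or_eq_neg_of_sq_eq_sq v2 1 (by rw [hv2, one_pow]) with rfl | rfl
  all_goals
    obtain rfl : e1 = -m0 := by linear_combination F7 / 32
    obtain rfl : e0 = -q / 2 := by linear_combination F6 / 32
    obtain rfl : z1 = 14 * k - 8 * m0 ^ 3 + 6 * m0 * q := by linear_combination F5 / 8
    obtain rfl : k = 4 / 55 * m0 * (4 * m0 ^ 2 - q) := by linear_combination G6 / 55
    obtain rfl : z0 = (-232 * m0 ^ 4 - 1042 * m0 ^ 2 * q) / 165 + 2 / 3 * q ^ 2 := by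
      linear_combination G5 / 24 + F4 / 12
    have hl : m0 ≠ 0 := fun h => hk (by rw [h]; ring)
    have hq' : 4 * m0 ^ 2 - q ≠ 0 := fun h => hk (by rw [h]; ring)
    obtain rfl : q = -(8 / 25) * m0 ^ 2 := by
      have : m0 * (4 * m0 ^ 2 - q) * (q + 8 / 25 * m0 ^ 2) = 0 := by
        linear_combination -11 / 200 * (F3 + 2 * m0 * F4)
      have := (mul_eq_zero.mp this).resolve_left (mul_ne_zero hl hq')
      linear_combination this
    obtain rfl : s = 31 / 20 * m0 := by
      refine mul_left_cancel₀ (pow_ne_zero 3 hl) ?_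
      linear_combination F4 / 144 * (1375 / 432)
    obtain rfl : d = 1331 / 400 * m0 ^ 2 := by
      refine mul_left_cancel₀ (pow_ne_zero 3 hl) ?_
      linear_combination G4 / 144 * (1375 / 432)
    refine ⟨m0, hl, rfl, ?_, rfl, ?_, ?_, ?_, rfl, rfl⟩ <;> ring

section Reduction

variable {R : Type*} [CommRing R] {x dx y q a b B g : R}

/-- For `f = x³ + a x + B` with derivative `df`, the combination `3 dx f - x df` is divisible by `y`
when `f = q y²`. -/
theorem mul_wronskian (h : x ^ 3 + a * x + B = q * y ^ 2)
    (hdf : (3 * x ^ 2 + a) * dx + b = y * g) :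
    y * (3 * dx * q * y - x * g) = dx * (2 * a * x + 3 * B) - b * x := by
  linear_combination x * hdf - 3 * dx * h

/-- For `f = x³ + a x + B` with derivative `df`, a combination of `f` and `df²` of low degree that is
divisible by `y²` when `f = q y²`. -/
theorem sq_mul_discr_form (h : x ^ 3 + a * x + B = q * y ^ 2)
    (hdf : (3 * x ^ 2 + a) * dx + b = y * g) :
    y ^ 2 * ((3 * x ^ 2 + 4 * a) * g ^ 2
        - q * ((27 * x ^ 3 + 27 * a * x - 27 * B) * dx ^ 2 + 18 * b * x * dx)) =
      (4 * a ^ 3 + 27 * B ^ 2) * dx ^ 2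
        + 2 * b * (6 * a * x ^ 2 - 9 * B * x + 4 * a ^ 2) * dx + b ^ 2 * (3 * x ^ 2 + 4 * a) := by
  linear_combination
    ((27 * x ^ 3 + 27 * a * x - 27 * B) * dx ^ 2 + 18 * b * x * dx) * h
      - (3 * x ^ 2 + 4 * a) * (y * g + (3 * x ^ 2 + a) * dx + b) * hdf

variable [IsDomain R] {w l : R}

theorem cubic_relation (hy : y ≠ 0) (h : x ^ 3 + a * x + B = q * y ^ 2)
    (hw : y * w = dx * (2 * a * x + 3 * B) - b * x)
    (hl : y ^ 2 * l = (4 * a ^ 3 + 27 * B ^ 2) * dx ^ 2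
        + 2 * b * (6 * a * x ^ 2 - 9 * B * x + 4 * a ^ 2) * dx + b ^ 2 * (3 * x ^ 2 + 4 * a)) :
    w ^ 2 * (a * x - 3 * B) + l * (a * x + B) = 4 * a * q * (a * dx + b) ^ 2 := by
  refine mul_left_cancel₀ (pow_ne_zero 2 hy) ?_
  linear_combination (a * x - 3 * B) * (y * w + (dx * (2 * a * x + 3 * B) - b * x)) * hw
    + (a * x + B) * hl + 4 * a * (a * dx + b) ^ 2 * h

theorem discr_relation (hy : y ≠ 0) (h : x ^ 3 + a * x + B = q * y ^ 2)
    (hw : y * w = dx * (2 * a * x + 3 * B) - b * x)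
    (hl : y ^ 2 * l = (4 * a ^ 3 + 27 * B ^ 2) * dx ^ 2
        + 2 * b * (6 * a * x ^ 2 - 9 * B * x + 4 * a ^ 2) * dx + b ^ 2 * (3 * x ^ 2 + 4 * a)) :
    (4 * a ^ 3 + 27 * B ^ 2) * w ^ 2 - (2 * a * x + 3 * B) ^ 2 * l =
      -6 * a * b * q * (2 * (2 * a * x + 3 * B) * (2 * a * dx + 3 * b)
        - 5 * b * (2 * a * x + 3 * B) + 3 * b * B) := by
  refine mul_left_cancel₀ (pow_ne_zero 2 hy) ?_
  linear_combination (4 * a ^ 3 + 27 * B ^ 2) * (y * w + (dx * (2 * a * x + 3 * B) - b * x)) * hw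
    - (2 * a * x + 3 * B) ^ 2 * hl
    - 6 * a * b * (2 * (2 * a * x + 3 * B) * (2 * a * dx + 3 * b)
        - 5 * b * (2 * a * x + 3 * B) + 3 * b * B) * h

end Reduction

theorem natDegree_right_le_of_mul_eq {p r s : ℂ[X]} {m n : ℕ} (h : p * r = s)
    (hp : p.natDegree = m) (hp0 : p ≠ 0) (hs : s.natDegree ≤ m + n) : r.natDegree ≤ n := by
  rcases eq_or_ne r 0 with rfl | hr
  · simp
  · have := natDegree_mul hp0 hr
    rw [h] at this
    omega

theorem right_eq_zero_of_mul_eq {p r s : ℂ[X]} {m n : ℕ} (h : p * r = s)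
    (hp : p.natDegree = m) (hp0 : p ≠ 0) (hs : s.natDegree ≤ n) (hn : n < m) : r = 0 := by
  by_contra hr
  have := natDegree_mul hp0 hr
  rw [h] at this
  omega

/-- A solution whose `Q` has no linear term has, up to the scales `l` of the variable and `x4` of
`X`, uniquely determined coefficients. -/
theorem centered_coeffs {x0 x1 x2 x3 x4 q p a b c : ℂ} {Y : ℂ[X]} (hx4 : x4 ≠ 0) (hp : p ≠ 0)
    (hY : Y.natDegree = 5)
    (h : (C x4 * X ^ 4 + C x3 * X ^ 3 + C x2 * X ^ 2 + C x1 * X + C x0) ^ 3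
        + C a * (C x4 * X ^ 4 + C x3 * X ^ 3 + C x2 * X ^ 2 + C x1 * X + C x0)
        + (C b * X + C c) = C p * (X ^ 2 - C q) * Y ^ 2)
    (hnd : 4 * C a ^ 3 + 27 * (C b * X + C c) ^ 2 ≠ 0) :
    ∃ l : ℂ, l ≠ 0 ∧ q = -(8 / 25) * l ^ 2 ∧ x3 = -4 * l * x4 ∧ x2 = 216 / 25 * l ^ 2 * x4 ∧
      x1 = -(8888 / 1375) * l ^ 3 * x4 ∧ x0 = 14740 / 6875 * l ^ 4 * x4 ∧
      a = 27 * (432 / 1375) ^ 2 * (1331 / 400) * l ^ 8 * x4 ^ 2 ∧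
      b = 864 / 1375 * l ^ 3 * a * x4 ∧ c = -(31 / 20) * l * b := by
  have hY0 : Y ≠ 0 := by
    rintro rfl
    simp at hY
  obtain ⟨x, hx⟩ : ∃ x : ℂ[X], x = C x4 * X ^ 4 + C x3 * X ^ 3 + C x2 * X ^ 2 + C x1 * X + C x0 :=
    ⟨_, rfl⟩
  obtain ⟨x', hx'⟩ : ∃ x' : ℂ[X], x' = derivative x := ⟨_, rfl⟩
  have hx'c : x' = 4 * C x4 * X ^ 3 + 3 * C x3 * X ^ 2 + 2 * C x2 * X + C x1 := by
    rw [hx', hx]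
    simp only [derivative_add, derivative_C_mul, derivative_X_pow, derivative_X, derivative_C]
    simp [map_ofNat C]
    ring
  rw [← hx] at h
  obtain ⟨g, hg⟩ : ∃ g, (3 * x ^ 2 + C a) * x' + C b = Y * g := by
    refine ⟨C p * (2 * X) * Y + 2 * (C p * (X ^ 2 - C q)) * derivative Y, ?_⟩
    have := congrArg derivative h
    simp only [derivative_add, derivative_sub, derivative_mul, derivative_pow, derivative_X,
      derivative_C, ← hx'] at this
    simp [map_ofNat C] at this
    linear_combination this
  have hw := mul_wronskian h hg
  have hl := sq_mul_discr_form h hg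
  generalize 3 * x' * (C p * (X ^ 2 - C q)) * Y - x * g = w at hw
  generalize (3 * x ^ 2 + 4 * C a) * g ^ 2 - _ = L at hl
  have hYY : (Y ^ 2).natDegree = 10 := by rw [natDegree_pow, hY]
  have hYY0 : Y ^ 2 ≠ 0 := pow_ne_zero 2 hY0
  have hb : b ≠ 0 := by
    rintro rfl
    have hL : L = 0 := by
      refine right_eq_zero_of_mul_eq (n := 6) hl hYY hYY0 ?_ (by norm_num)
      rw [hx'c]
      simp only [C_0, mul_zero, zero_mul, add_zero, zero_add, ne_eq, OfNat.ofNat_ne_zero,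
        not_false_eq_true, zero_pow]
      compute_degree
    rw [hL] at hl
    have hx0 : x' ≠ 0 := by
      intro h0
      have := coeffs_eq_zero_of_forall_eval
        (c := ![x1, 2 * x2, 3 * x3, 4 * x4, 0, 0, 0, 0, 0, 0]) (fun t => by
          have := congrArg (eval t) (hx'c.symm.trans h0)
          simp at this
          simp [Fin.sum_univ_succ]
          linear_combination this) 3
      simp [hx4] at this
    have : (4 * C a ^ 3 + 27 * (C 0 * X + C c) ^ 2) * x' ^ 2 = 0 := by
      simp at hl ⊢
      tauto
    exact (mul_ne_zero hnd (pow_ne_zero 2 hx0)) this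
  have ha : a ≠ 0 := by
    rintro rfl
    have hW : w = 0 := by
      refine right_eq_zero_of_mul_eq (n := 4) hw hY hY0 ?_ (by norm_num)
      rw [hx'c, hx]
      simp only [C_0, zero_mul, mul_zero, zero_add]
      compute_degree
    rw [hW] at hw
    have := coeffs_eq_zero_of_forall_eval
      (c := ![3 * c * x1 - b * x0, 2 * b * x1 + 6 * c * x2, 5 * b * x2 + 9 * c * x3,
        8 * b * x3 + 12 * c * x4, 11 * b * x4, 0, 0, 0, 0, 0]) (fun t => by
        have := congrArg (eval t) hw
        simp [hx'c, hx] at this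
        simp [Fin.sum_univ_succ]
        linear_combination -this) 4
    simp [hx4, hb] at this
  have hwdeg : w.natDegree ≤ 2 := by
    refine natDegree_right_le_of_mul_eq hw hY hY0 ?_
    rw [hx'c, hx]
    compute_degree
  have hLdeg : L.natDegree ≤ 1 := by
    refine natDegree_right_le_of_mul_eq hl hYY hYY0 ?_
    rw [hx'c, hx]
    compute_degree
  have hF := cubic_relation hY0 h hw hl
  have hG := discr_relation hY0 h hw hl
  obtain ⟨ω, hω⟩ := IsAlgClosed.exists_pow_nat_eq (64 * a ^ 2 * p * x4) (n := 2) (by norm_num)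
  have hω0 : ω ≠ 0 := by
    rintro rfl
    simp [ha, hp, hx4] at hω
  obtain ⟨k, rfl⟩ : ∃ k, b = 2 * a * x4 * k := ⟨b / (2 * a * x4), by field_simp⟩
  have hk : k ≠ 0 := right_ne_zero_of_mul hb
  obtain ⟨s, rfl⟩ : ∃ s, c = -(2 * a * x4 * k) * s := ⟨-c / (2 * a * x4 * k), by field_simp⟩
  obtain ⟨d, hd⟩ : ∃ d, a = 27 * x4 ^ 2 * k ^ 2 * d :=
    ⟨a / (27 * x4 ^ 2 * k ^ 2), by field_simp⟩
  obtain ⟨z3, rfl⟩ : ∃ z, x3 = x4 * z := ⟨x3 / x4, by field_simp⟩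
  obtain ⟨z2, rfl⟩ : ∃ z, x2 = x4 * z := ⟨x2 / x4, by field_simp⟩
  obtain ⟨z1, rfl⟩ : ∃ z, x1 = x4 * (z - 3 * k) := ⟨x1 / x4 + 3 * k, by field_simp; ring⟩
  obtain ⟨z0, rfl⟩ : ∃ z, x0 = x4 * (z + 3 * k * s) := ⟨x0 / x4 - 3 * k * s, by field_simp; ring⟩
  have hwe (t : ℂ) : w.eval t =
      ω * (w.coeff 2 / ω * t ^ 2 + w.coeff 1 / ω * t + w.coeff 0 / ω) := by
    rw [eval_eq_sum_range' (Nat.lt_succ_of_le hwdeg)]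
    simp [Finset.sum_range_succ]
    field_simp
    ring
  have hLe (t : ℂ) : L.eval t = 96 * a ^ 2 * x4 * k * p
      * (L.coeff 1 / (96 * a ^ 2 * x4 * k * p) * t + L.coeff 0 / (96 * a ^ 2 * x4 * k * p)) := by
    rw [eval_eq_sum_range' (Nat.lt_succ_of_le hLdeg)]
    simp [Finset.sum_range_succ]
    field_simp
    ring
  obtain ⟨l, hl0, rfl, rfl, rfl, rfl, rfl, rfl, rfl, rfl⟩ :=
    normalized_coeffs z0 z1 z2 z3 (w.coeff 0 / ω) (w.coeff 1 / ω) (w.coeff 2 / ω)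
      (L.coeff 0 / (96 * a ^ 2 * x4 * k * p)) (L.coeff 1 / (96 * a ^ 2 * x4 * k * p)) q s d k hk
      (fun t => by
        have := congrArg (eval t) hF
        simp only [eval_add, eval_sub, eval_mul, eval_pow, eval_C, eval_X, eval_ofNat, hwe, hLe,
          hx, hx'c] at this
        generalize w.coeff 2 / ω * t ^ 2 + w.coeff 1 / ω * t + w.coeff 0 / ω = U at this ⊢
        generalize L.coeff 1 / (96 * a ^ 2 * x4 * k * p) * t
          + L.coeff 0 / (96 * a ^ 2 * x4 * k * p) = M at this ⊢
        have hne : 4 * a ^ 3 * p * x4 ^ 2 ≠ 0 := by simp [ha, hp, hx4]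
        refine (mul_eq_zero.mp ?_).resolve_left hne
        linear_combination this - U ^ 2 * (a * x4)
          * (t ^ 4 + z3 * t ^ 3 + z2 * t ^ 2 + z1 * t + z0 - 9 * k * (t - s)) * hω)
      (fun t => by
        have := congrArg (eval t) hG
        simp only [eval_add, eval_sub, eval_mul, eval_pow, eval_C, eval_X, eval_ofNat, eval_neg,
          hwe, hLe, hx, hx'c] at this
        generalize w.coeff 2 / ω * t ^ 2 + w.coeff 1 / ω * t + w.coeff 0 / ω = U at this ⊢
        generalize L.coeff 1 / (96 * a ^ 2 * x4 * k * p) * t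
          + L.coeff 0 / (96 * a ^ 2 * x4 * k * p) = M at this ⊢
        have hne : 48 * a ^ 4 * p * x4 ^ 3 * k ≠ 0 := by simp [ha, hp, hx4, hk]
        refine (mul_eq_zero.mp ?_).resolve_left hne
        linear_combination this
          - (4 * a ^ 3 + 27 * (2 * a * x4 * k) ^ 2 * (t - s) ^ 2) * U ^ 2 * hω
          - 256 * a ^ 4 * p * x4 * U ^ 2 * hd)
  refine ⟨l, hl0, rfl, ?_, ?_, ?_, ?_, ?_, ?_, ?_⟩
  · ring
  · ring
  · ring
  · ring
  · linear_combination hd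
  · ring
  · ring

/-- Uniqueness of the Elkies solution: any nondegenerate solution in `ℂ[t]` of
`X³ + A·X + B = Q·Y²` with `deg X = 4`, `deg Y = 5`, `deg Q = 2`, `A` constant,
`deg B ≤ 1` is obtained from the Elkies solution
`X₀ = 324t⁴ - 360t³ + 216t² - 84t + 15`, `A₀ = 33`, `B₀ = -18(8t - 1)`,
`Q₀ = 9t² - 10t + 3`, `Y₀ = 36(54t⁵ - 60t⁴ + 45t³ - 21t² + 6t - 1)` by the
rescaling `t ↦ λt + μ`, `(X, A, B, Q, Y) ↦ (u²X₀, 33u⁴, u⁶B₀, v²Q₀, u³v⁻¹Y₀)`. -/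
theorem elkies_first_case_uniqueness
    (Xp Yp Qp A B : ℂ[X])
    (hXdeg : Xp.degree = 4) (hYdeg : Yp.degree = 5) (hQdeg : Qp.degree = 2)
    (hAconst : A.degree ≤ 0) (hBdeg : B.degree ≤ 1)
    (heq : Xp ^ 3 + A * Xp + B = Qp * Yp ^ 2)
    (hnondeg : 4 * A ^ 3 + 27 * B ^ 2 ≠ 0) :
    ∃ l u v μ : ℂ, l ≠ 0 ∧ u ≠ 0 ∧ v ≠ 0 ∧
      Xp = C (u ^ 2) *
          (324 * X ^ 4 - 360 * X ^ 3 + 216 * X ^ 2 - 84 * X + 15 : ℂ[X]).comp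
            (C l * X + C μ) ∧
      A = C (33 * u ^ 4) ∧
      B = C (u ^ 6) * (-18 * (8 * X - 1) : ℂ[X]).comp (C l * X + C μ) ∧
      Qp = C (v ^ 2) * (9 * X ^ 2 - 10 * X + 3 : ℂ[X]).comp (C l * X + C μ) ∧
      Yp = C (u ^ 3 * v⁻¹) *
          (36 * (54 * X ^ 5 - 60 * X ^ 4 + 45 * X ^ 3 - 21 * X ^ 2 + 6 * X - 1) :
            ℂ[X]).comp (C l * X + C μ) := by
  have hXnat : Xp.natDegree = 4 := natDegree_eq_of_degree_eq_some hXdeg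
  have hYnat : Yp.natDegree = 5 := natDegree_eq_of_degree_eq_some hYdeg
  have hQnat : Qp.natDegree = 2 := natDegree_eq_of_degree_eq_some hQdeg
  have hQ0 : Qp ≠ 0 := by
    rintro rfl
    simp at hQnat
  have hp : Qp.coeff 2 ≠ 0 := by
    rw [← hQnat, coeff_natDegree]
    exact leadingCoeff_ne_zero.mpr hQ0
  obtain ⟨r, hr⟩ : ∃ r, Qp.coeff 1 = -2 * Qp.coeff 2 * r :=
    ⟨-Qp.coeff 1 / (2 * Qp.coeff 2), by field_simp⟩
  obtain ⟨q, hq⟩ : ∃ q, Qp.coeff 0 = Qp.coeff 2 * (r ^ 2 - q) :=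
    ⟨r ^ 2 - Qp.coeff 0 / Qp.coeff 2, by field_simp; ring⟩
  obtain ⟨a, rfl⟩ : ∃ a, A = C a := ⟨_, eq_C_of_degree_le_zero hAconst⟩
  obtain ⟨b, c, rfl⟩ : ∃ b c, B = C b * (X - C r) + C c :=
    ⟨B.coeff 1, B.coeff 1 * r + B.coeff 0, by
      conv_lhs => rw [eq_X_add_C_of_degree_le_one hBdeg]
      simp only [C_add, C_mul]
      ring⟩
  have hQ : Qp = C (Qp.coeff 2) * ((X - C r) ^ 2 - C q) := by
    conv_lhs => rw [eq_quadratic_of_degree_le_two hQdeg.le, hr, hq]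
    simp only [C_mul, C_sub, C_pow, C_neg, map_ofNat C]
    ring
  generalize Qp.coeff 2 = p at hp hQ
  have hQeval (t : ℂ) : Qp.eval t = p * ((t - r) ^ 2 - q) := by
    rw [hQ]
    simp
  clear hr hq
  obtain ⟨x0, x1, x2, x3, x4, hx4, hX⟩ : ∃ x0 x1 x2 x3 x4 : ℂ, x4 ≠ 0 ∧ Xp.comp (X + C r) =
      C x4 * X ^ 4 + C x3 * X ^ 3 + C x2 * X ^ 2 + C x1 * X + C x0 := by
    have hdeg : (Xp.comp (X + C r)).natDegree = 4 := by
      rw [natDegree_comp, natDegree_X_add_C, hXnat]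
    refine ⟨(Xp.comp (X + C r)).coeff 0, (Xp.comp (X + C r)).coeff 1, (Xp.comp (X + C r)).coeff 2,
      (Xp.comp (X + C r)).coeff 3, (Xp.comp (X + C r)).coeff 4, ?_, ?_⟩
    · rw [← hdeg, coeff_natDegree, leadingCoeff_ne_zero]
      intro h0
      simp [h0] at hdeg
    · conv_lhs => rw [as_sum_range' (Xp.comp (X + C r)) 5 (by omega)]
      simp [Finset.sum_range_succ, ← C_mul_X_pow_eq_monomial]
      ring
  have hXeval (t : ℂ) : Xp.eval t =
      x4 * (t - r) ^ 4 + x3 * (t - r) ^ 3 + x2 * (t - r) ^ 2 + x1 * (t - r) + x0 := by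
    simpa using congrArg (eval (t - r)) hX
  have hcomp : (C x4 * X ^ 4 + C x3 * X ^ 3 + C x2 * X ^ 2 + C x1 * X + C x0) ^ 3
        + C a * (C x4 * X ^ 4 + C x3 * X ^ 3 + C x2 * X ^ 2 + C x1 * X + C x0)
        + (C b * X + C c) = C p * (X ^ 2 - C q) * Yp.comp (X + C r) ^ 2 := by
    have := congrArg (fun f : ℂ[X] => f.comp (X + C r)) heq
    simp only [hQ, add_comp, mul_comp, pow_comp, sub_comp, C_comp, X_comp, hX,
      add_sub_cancel_right] at this
    exact this
  have hnd : 4 * C a ^ 3 + 27 * (C b * X + C c) ^ 2 ≠ 0 := by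
    intro h0
    apply hnondeg
    have := congrArg (fun f : ℂ[X] => f.comp (X - C r)) h0
    simpa only [add_comp, mul_comp, pow_comp, C_comp, X_comp, ofNat_comp, Nat.cast_ofNat, zero_comp]
      using this
  have hYcomp : (Yp.comp (X + C r)).natDegree = 5 := by
    rw [natDegree_comp, natDegree_X_add_C, hYnat]
  obtain ⟨l, hl, rfl, rfl, rfl, rfl, rfl, ha, rfl, rfl⟩ :=
    centered_coeffs hx4 hp hYcomp hcomp hnd
  obtain ⟨m, rfl⟩ : ∃ m, l = -(5 / 18) * m⁻¹ := ⟨-(5 / 18) * l⁻¹, by field_simp⟩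
  have hm : m ≠ 0 := by
    rintro rfl
    simp at hl
  obtain ⟨u, hu⟩ := IsAlgClosed.exists_pow_nat_eq (x4 / (324 * m ^ 4)) (n := 2) (by norm_num)
  obtain ⟨v, hv⟩ := IsAlgClosed.exists_pow_nat_eq (p / (9 * m ^ 2)) (n := 2) (by norm_num)
  obtain rfl : x4 = 324 * m ^ 4 * u ^ 2 := by rw [hu]; field_simp
  obtain rfl : p = 9 * m ^ 2 * v ^ 2 := by rw [hv]; field_simp
  have hu0 : u ≠ 0 := by
    rintro rfl
    simp at hx4
  have hv0 : v ≠ 0 := by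
    rintro rfl
    simp at hp
  obtain rfl : a = 33 * u ^ 4 := by
    rw [ha]
    field_simp
    norm_num
  have hX' : Xp = C (u ^ 2) *
      (324 * X ^ 4 - 360 * X ^ 3 + 216 * X ^ 2 - 84 * X + 15 : ℂ[X]).comp
        (C m * X + C (5 / 9 - m * r)) := by
    refine Polynomial.funext fun t => ?_
    rw [hXeval]
    simp
    field_simp
    ring
  have hB' : C (864 / 1375 * (-(5 / 18) * m⁻¹) ^ 3 * (33 * u ^ 4) * (324 * m ^ 4 * u ^ 2))
        * (X - C r) + C (-(31 / 20) * (-(5 / 18) * m⁻¹) *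
          (864 / 1375 * (-(5 / 18) * m⁻¹) ^ 3 * (33 * u ^ 4) * (324 * m ^ 4 * u ^ 2))) =
      C (u ^ 6) * (-18 * (8 * X - 1) : ℂ[X]).comp (C m * X + C (5 / 9 - m * r)) := by
    refine Polynomial.funext fun t => ?_
    simp
    field_simp
    ring
  have hQ' : Qp = C (v ^ 2) * (9 * X ^ 2 - 10 * X + 3 : ℂ[X]).comp
      (C m * X + C (5 / 9 - m * r)) := by
    refine Polynomial.funext fun t => ?_
    rw [hQeval]
    simp
    field_simp
    ring
  obtain ⟨S, hS⟩ : ∃ S : ℂ[X], S = (36 * (54 * X ^ 5 - 60 * X ^ 4 + 45 * X ^ 3 - 21 * X ^ 2 + 6 * X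
      - 1) : ℂ[X]).comp (C m * X + C (5 / 9 - m * r)) := ⟨_, rfl⟩
  have hsq : Yp ^ 2 = (C (u ^ 3 * v⁻¹) * S) ^ 2 := by
    refine mul_left_cancel₀ hQ0 ?_
    rw [← heq, hB', hQ', hX', hS]
    refine Polynomial.funext fun t => ?_
    simp
    field_simp
    ring
  rw [hB']
  rw [hS] at hsq
  rcases eq_or_eq_neg_of_sq_eq_sq _ _ hsq with hY | hY
  · exact ⟨m, u, v, 5 / 9 - m * r, hm, hu0, hv0, hX', rfl, rfl, hQ', hY⟩
  · refine ⟨m, u, -v, 5 / 9 - m * r, hm, hu0, neg_ne_zero.mpr hv0, hX', rfl, rfl, ?_, ?_⟩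
    · rw [neg_sq]
      exact hQ'
    · rw [hY, inv_neg, mul_neg, C_neg, neg_mul]
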